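/- Let p be a prime, let d ≥ 2 be an integer, let a be a nonzero rational number, and let b = σ·p^e with σ ∈ {1, −1} and e a nonnegative integer. Then the set PrePer(ψ_{d,a,b}, ℙ¹(ℚ)) of rational preperiodic points of ψ_{d,a,b} has at most 6 elements. -/

import Mathlib

/-- The map `ψ_{d,a,b} : ℙ¹(ℚ) → ℙ¹(ℚ)`, with `ℙ¹(ℚ)` modeled as `Option ℚ`
(`some z` is the affine point `z`, and `none` is the point at infinity `[1 : 0]`).
In homogeneous coordinates the map is `[X : Y] ↦ [X·Y^{d−1} : a·X^d + b·Y^d]`;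
on the affine chart it is `z ↦ z / (a·z^d + b)`, the point at infinity mapping to `0`. -/
def psi (d : ℕ) (a b : ℚ) : Option ℚ → Option ℚ
  | none => some 0
  | some z => if a * z ^ d + b = 0 then none else some (z / (a * z ^ d + b))

/-!
Put `r = a z ^ d + b`, so that `ψ z = z / r`. Then `ψ` induces the map `r ↦ b + (r - b) / r ^ d`,
and it suffices to find its preperiodic points and to count the `z` above each.

*Periodic `r ≠ b` satisfy `r ^ d = 1`.* The quantity `v (r - b)` drops by `d * v r` at each step, so
if the valuation `v` of `r` has constant sign along a cycle then it vanishes there. For a prime not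
dividing `b` the valuations are nonnegative. For `p ∣ b` a point with `0 < v r` would be an
integer `R = ± p ^ k` whose image has no primes but `p` in its numerator and denominator, which
leaves only the case `d = 2`, `R = -b = ± 2`, and this point is not periodic. Hence `r = ± 1`.

*Backward orbits are short.* With `r = x / y` in lowest terms, each preimage equation becomes a
coprimality argument over `ℤ`; it works for every nonzero integer `b`.

*Counting.* If `d` is odd, each value of `r` comes from at most one `z`. If `d` is even, it comes
from at most two, but the values `r - b = a z ^ d` all lie in the square class of `a`, whereas the
preperiodic values `r ≠ b` have `r - b` in the classes of those of `-b`, `1 - b` and `-1 - b` that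
are nonzero. These classes are distinct, so only one can be that of `a`, and each contains at most
two values.
-/

open Function Set

section PeriodicPoints

variable {α β : Type*} {f : α → α} {s : Set α} {x : α}

lemma mem_of_apply_mem_of_mem_periodicPts (hs : MapsTo f s s) (hx : x ∈ periodicPts f)
    (hfx : f x ∈ s) : x ∈ s := by
  obtain ⟨n, hn, hper⟩ := hx
  have hmem : f^[n - 1] (f x) ∈ s := hs.iterate (n - 1) hfx
  rwa [← iterate_succ_apply, Nat.succ_eq_add_one, Nat.sub_add_cancel hn, hper] at hmem

lemma apply_eq_of_forall_apply_le [PartialOrder β] {φ : α → β} (hs : MapsTo f s s)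
    (hper : s ⊆ periodicPts f) (hφ : ∀ y ∈ s, φ (f y) ≤ φ y) (hx : x ∈ s) : φ (f x) = φ x := by
  have hmaps : MapsTo f {y ∈ s | φ y ≤ φ (f x)} {y ∈ s | φ y ≤ φ (f x)} :=
    fun y hy => ⟨hs hy.1, (hφ y hy.1).trans hy.2⟩
  exact (hφ x hx).antisymm
    (mem_of_apply_mem_of_mem_periodicPts hmaps (hper hx) ⟨hs hx, le_rfl⟩).2

lemma mem_of_iterate_eq_iterate (hper : periodicPts f ⊆ s) (hback : ∀ y, f y ∈ s → y ∈ s) {m n : ℕ}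
    (hmn : m < n) (h : f^[m] x = f^[n] x) : x ∈ s := by
  have hm : f^[m] x ∈ s := by
    refine hper (mk_mem_periodicPts (Nat.sub_pos_of_lt hmn) ?_)
    rw [IsPeriodicPt, IsFixedPt, ← iterate_add_apply, Nat.sub_add_cancel hmn.le, h]
  clear h hmn
  induction m with
  | zero => exact hm
  | succ m ih => exact ih (hback _ (by rwa [iterate_succ_apply'] at hm))

end PeriodicPoints

section Integers

lemma pow_add_add_le_pow {m n d : ℕ} (hmn : m < n) (hd : 2 ≤ d) : m ^ d + (m + n) ≤ n ^ d := by
  induction d, hd using Nat.le_induction with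
  | base => nlinarith
  | succ d _ ih =>
    calc m ^ (d + 1) + (m + n) ≤ m ^ d * n + (m + n) * n := by
          rw [pow_succ]
          gcongr
          exact Nat.le_mul_of_pos_right _ (by omega)
      _ = (m ^ d + (m + n)) * n := by ring
      _ ≤ n ^ (d + 1) := by rw [pow_succ]; gcongr

lemma pow_add_add_lt_pow {m n d : ℕ} (hm : m ≠ 0) (hmn : m < n) (hd : 3 ≤ d) :
    m ^ d + (m + n) < n ^ d := by
  obtain ⟨d, rfl⟩ : ∃ k, d = k + 1 := ⟨d - 1, by omega⟩
  calc m ^ (d + 1) + (m + n) < m ^ d * n + (m + n) * n := by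
        rw [pow_succ]
        gcongr
        exact lt_mul_of_one_lt_right (by omega) (by omega)
    _ = (m ^ d + (m + n)) * n := by ring
    _ ≤ n ^ (d + 1) := by
        rw [pow_succ]
        gcongr
        exact pow_add_add_le_pow hmn (by omega)

variable {x y : ℤ} {d : ℕ}

lemma not_isUnit_pow_sub_pow (hx : x ≠ 0) (hy : y ≠ 0) (hd : 2 ≤ d) : ¬ IsUnit (x ^ d - y ^ d) := by
  rw [Int.isUnit_iff_natAbs_eq]
  have hxd := Int.natAbs_pow x d
  have hyd := Int.natAbs_pow y d
  rcases lt_trichotomy x.natAbs y.natAbs with hlt | heq | hlt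
  · have := pow_add_add_le_pow hlt hd
    omega
  · rw [heq] at hxd
    omega
  · have := pow_add_add_le_pow hlt hd
    omega

lemma natAbs_eq_natAbs_of_natAbs_pow_sub_pow_eq (hx : x ≠ 0) (hy : y ≠ 0) (hd : 3 ≤ d)
    (h : (x ^ d - y ^ d).natAbs = (x - y).natAbs) : x.natAbs = y.natAbs := by
  have hxd := Int.natAbs_pow x d
  have hyd := Int.natAbs_pow y d
  rcases lt_trichotomy x.natAbs y.natAbs with hlt | heq | hlt
  · have := pow_add_add_lt_pow (Int.natAbs_ne_zero.2 hx) hlt hd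
    omega
  · exact heq
  · have := pow_add_add_lt_pow (Int.natAbs_ne_zero.2 hy) hlt hd
    omega

lemma isCoprime_pow_sub_pow_right {R : Type*} [CommRing R] {x y : R} {d : ℕ} (h : IsCoprime x y)
    (hd : d ≠ 0) : IsCoprime (x ^ d - y ^ d) y := by
  obtain ⟨k, rfl⟩ := Nat.exists_eq_succ_of_ne_zero hd
  have := (h.pow_left (m := k + 1)).add_mul_left_left (-y ^ k)
  rwa [mul_neg, ← sub_eq_add_neg, ← pow_succ'] at this

lemma mul_pow_sub_pow_ne {b : ℤ} (hxy : IsCoprime x y) (hx : x ≠ 0) (hy : y ≠ 0) (hd : 2 ≤ d) :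
    b * (y ^ d - x ^ d) ≠ x * y ^ (d - 1) := by
  intro h
  have hcop : IsCoprime (y ^ d - x ^ d) (x * y ^ (d - 1)) := by
    refine (isCoprime_pow_sub_pow_right hxy.symm (by omega)).mul_right (IsCoprime.pow_right ?_)
    rw [← neg_sub, IsCoprime.neg_left_iff]
    exact isCoprime_pow_sub_pow_right hxy (by omega)
  exact not_isUnit_pow_sub_pow hy hx hd (hcop.isUnit_of_dvd' dvd_rfl (Dvd.intro_left b h))

lemma natAbs_eq_of_mul_pow_sub_pow_eq {c : ℤ} (hxy : IsCoprime x y) (hx : x ≠ 0) (hy : y ≠ 0)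
    (hd : 3 ≤ d) (h : c * (x ^ d - y ^ d) = y ^ (d - 1) * (x - y)) : x.natAbs = y.natAbs := by
  rcases eq_or_ne x y with rfl | hne
  · rfl
  obtain ⟨q, hq⟩ := sub_dvd_pow_sub_pow x y d
  have hcq : c * q = y ^ (d - 1) := by
    apply mul_right_cancel₀ (sub_ne_zero.2 hne)
    rw [← h, hq]
    ring
  have hcop : IsCoprime q (y ^ (d - 1)) := by
    have := isCoprime_pow_sub_pow_right hxy (show d ≠ 0 by omega)
    rw [hq] at this
    exact this.of_mul_left_right.pow_right
  have hunit : IsUnit q := hcop.isUnit_of_dvd' dvd_rfl (Dvd.intro_left c hcq)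
  apply natAbs_eq_natAbs_of_natAbs_pow_sub_pow_eq hx hy hd
  rw [hq, Int.natAbs_mul, Int.isUnit_iff_natAbs_eq.1 hunit, mul_one]

lemma mul_sq_le_cube_add_cube_sq {u v : ℤ} (h : u ^ 3 + v ^ 3 ≠ 0) :
    (u * v) ^ 2 ≤ (u ^ 3 + v ^ 3) ^ 2 := by
  have hfac : u ^ 3 + v ^ 3 = (u + v) * (u ^ 2 - u * v + v ^ 2) := by ring
  have hsum : 1 ≤ (u + v) ^ 2 := by
    have : u + v ≠ 0 := fun h0 => h (by rw [hfac, h0, zero_mul])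
    have := sq_pos_of_ne_zero this
    omega
  calc (u * v) ^ 2 ≤ (u * v) ^ 2 + (u - v) ^ 2 * (u ^ 2 + v ^ 2) := by
        have : 0 ≤ (u - v) ^ 2 * (u ^ 2 + v ^ 2) := by positivity
        omega
    _ = (u ^ 2 - u * v + v ^ 2) ^ 2 := by ring
    _ ≤ (u + v) ^ 2 * (u ^ 2 - u * v + v ^ 2) ^ 2 := le_mul_of_one_le_left (sq_nonneg _) hsum
    _ = (u ^ 3 + v ^ 3) ^ 2 := by rw [hfac, mul_pow]

lemma sq_le_sq_of_mul_sub_eq_cube {c : ℤ} (hxy : IsCoprime x y) (hx : x ≠ 0)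
    (h : y * (x - y) = c ^ 3) : c ^ 2 ≤ x ^ 2 := by
  have hcop : IsCoprime y (x - y) := by
    simpa [sub_eq_add_neg] using (hxy.symm.add_mul_left_right (-1))
  obtain ⟨⟨u, hu⟩, v, hv⟩ := Int.eq_pow_of_mul_eq_pow_odd hcop (by decide : Odd 3) h
  have hc : c = u * v := by
    rw [hv, hu, ← mul_pow] at h
    exact ((by decide : Odd 3).pow_injective h).symm
  have hxuv : x = u ^ 3 + v ^ 3 := by rw [← hu, ← hv]; ring
  rw [hc, hxuv]
  exact mul_sq_le_cube_add_cube_sq (hxuv ▸ hx)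

lemma cube_mul_sq_ne {b : ℤ} (hb0 : b ≠ 0) (hb1 : b ≠ 1) (hxy : IsCoprime x y) (hx : x ≠ 0) :
    b ^ 3 * x ^ 2 ≠ (1 - b) * (y * (x - y)) := by
  intro h
  have hcopx : IsCoprime (x ^ 2) (y * (x - y)) := by
    refine (hxy.mul_right ?_).pow_left
    simpa [sub_eq_neg_add] using hxy.neg_right.add_mul_left_right 1
  have hcopb : IsCoprime (b ^ 3) (1 - b) := IsCoprime.pow_left ⟨1, 1, by ring⟩
  have hsq : (x ^ 2).natAbs = (1 - b).natAbs :=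
    Int.natAbs_eq_of_dvd_dvd (hcopx.dvd_of_dvd_mul_right (Dvd.intro_left _ h))
      (hcopb.symm.dvd_of_dvd_mul_left (Dvd.intro _ h.symm))
  have hcube : (y * (x - y)).natAbs = (b ^ 3).natAbs :=
    Int.natAbs_eq_of_dvd_dvd (hcopx.symm.dvd_of_dvd_mul_right (Dvd.intro_left _ h.symm))
      (hcopb.dvd_of_dvd_mul_left (Dvd.intro _ h))
  have hle : b ^ 2 ≤ x ^ 2 := by
    rcases Int.natAbs_eq_natAbs_iff.1 hcube with h3 | h3
    · exact sq_le_sq_of_mul_sub_eq_cube hxy hx h3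
    · rw [← neg_sq b]
      exact sq_le_sq_of_mul_sub_eq_cube hxy hx (h3.trans (by ring))
  have hbound : b ^ 2 ≤ 1 + |b| := by
    have hx2 := sq_nonneg x
    rcases abs_cases b with hb | hb <;> omega
  have hb : b = -1 := by
    have : |b| < 2 := by rw [← sq_abs] at hbound; nlinarith
    have := abs_lt.1 this
    omega
  subst hb
  have hx2 : x * x = 2 := by have := sq_nonneg x; rw [← sq]; omega
  exact Int.prime_two.not_isSquare ⟨x, hx2.symm⟩

end Integers

section PrimePowers

lemma four_le_abs_pow {x : ℤ} {d : ℕ} (hx : 2 ≤ |x|) (hd : 2 ≤ d) : 4 ≤ |x ^ d| :=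
  calc (4 : ℤ) = 2 ^ 2 := by norm_num
    _ ≤ |x| ^ 2 := by gcongr
    _ ≤ |x| ^ d := pow_le_pow_right₀ (by omega) hd
    _ = |x ^ d| := (abs_pow x d).symm

lemma not_isUnit_one_add_mul {m n : ℤ} (hm : m ≠ 0) (hn : 3 ≤ |n|) : ¬ IsUnit (1 + m * n) := by
  have hmn : 3 ≤ |m * n| := by
    rw [abs_mul]
    exact hn.trans (le_mul_of_one_le_left (abs_nonneg n) (Int.one_le_abs hm))
  rw [Int.isUnit_iff]
  rcases le_abs.1 hmn with h | h <;> omega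

variable {p : ℕ} {M N b R : ℤ} {d : ℕ}

lemma isUnit_of_dvd_of_not_dvd (hM : ∀ l : ℕ, l.Prime → (l : ℤ) ∣ M → l = p) (hNM : N ∣ M)
    (hpN : ¬ (p : ℤ) ∣ N) : IsUnit N := by
  by_contra hN
  rw [Int.isUnit_iff_natAbs_eq] at hN
  obtain ⟨l, hl, hlN⟩ := Nat.exists_prime_and_dvd hN
  rw [← Int.natCast_dvd] at hlN
  exact hpN (hM l hl (hlN.trans hNM) ▸ hlN)

lemma isUnit_one_add_mul_of_dvd (hp : p.Prime) (hM : ∀ l : ℕ, l.Prime → (l : ℤ) ∣ M → l = p)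
    (h : 1 + p * N ∣ M) : IsUnit (1 + p * N) := by
  refine isUnit_of_dvd_of_not_dvd hM h fun hdvd => hp.one_lt.ne' ?_
  exact Nat.dvd_one.1 (Int.natCast_dvd_natCast.1 (by simpa using hdvd))

lemma sq_eq_four_of_prime_dvd (hp : p.Prime) (hd : 2 ≤ d) (hR : 2 ≤ |R|) (hpR : (p : ℤ) ∣ R)
    (hM : ∀ l : ℕ, l.Prime → (l : ℤ) ∣ R * (2 - R ^ d) → l = p) : d = 2 ∧ R ^ 2 = 4 := by
  have hRd := four_le_abs_pow hR hd
  have hpdvd : (p : ℤ) ∣ 2 - R ^ d := by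
    by_contra hnot
    have hunit := isUnit_of_dvd_of_not_dvd hM (dvd_mul_left _ _) hnot
    rw [show 2 - R ^ d = 1 + 1 * (1 - R ^ d) by ring] at hunit
    refine not_isUnit_one_add_mul one_ne_zero ?_ hunit
    rw [le_abs] at hRd ⊢
    omega
  obtain rfl : p = 2 := by
    have h2 := (dvd_sub_left (hpR.trans (dvd_pow_self R (by omega)))).1 hpdvd
    exact (Nat.prime_dvd_prime_iff_eq hp Nat.prime_two).1 (Int.natCast_dvd_natCast.1 h2)
  obtain ⟨c, hc⟩ : (4 : ℤ) ∣ R ^ d := (pow_dvd_pow_of_dvd hpR 2).trans (pow_dvd_pow R hd)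
  have hunit : IsUnit (1 + ((2 : ℕ) : ℤ) * -c) :=
    isUnit_one_add_mul_of_dvd hp hM ⟨2 * R, by rw [hc]; push_cast; ring⟩
  have hR4 : R ^ d = 4 := by
    rw [Int.isUnit_iff] at hunit
    rw [le_abs] at hRd
    omega
  obtain rfl : d = 2 := by
    by_contra hne
    have h8 : (2 : ℤ) ^ 3 ≤ |R| ^ d :=
      (pow_le_pow_left₀ zero_le_two hR 3).trans (pow_le_pow_right₀ (by omega) (by omega))
    rw [← abs_pow, hR4] at h8
    norm_num at h8
  exact ⟨rfl, hR4⟩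

-- `R - b + b * R ^ d` is `R ^ d` times the image of `R` under `r ↦ b + (r - b) / r ^ d`.
lemma not_prime_mul_dvd_left (hp : p.Prime) (hd : 2 ≤ d) (hb : b ≠ 0) (hR : 2 ≤ |R|)
    (hM : ∀ l : ℕ, l.Prime → (l : ℤ) ∣ R - b + b * R ^ d → l = p) : ¬ p * R ∣ b := by
  rintro ⟨c, rfl⟩
  have hunit := isUnit_one_add_mul_of_dvd hp hM (N := c * (R ^ d - 1)) ⟨R, by ring⟩
  rw [← mul_assoc] at hunit
  refine not_isUnit_one_add_mul (fun h0 => hb ?_) ?_ hunit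
  · rw [mul_right_comm, h0, zero_mul]
  · have hRd := four_le_abs_pow hR hd
    rw [le_abs] at hRd ⊢
    omega

lemma not_prime_mul_dvd_right (hp : p.Prime) (hd : 2 ≤ d) (hb : 2 ≤ |b|) (hR : 2 ≤ |R|)
    (hM : ∀ l : ℕ, l.Prime → (l : ℤ) ∣ R - b + b * R ^ d → l = p) : ¬ p * b ∣ R := by
  rintro ⟨c, hc⟩
  have hdvd : 1 + p * (-c * (1 + b * R ^ (d - 1))) ∣ R - b + b * R ^ d := by
    refine ⟨-b, ?_⟩
    rw [← mul_pow_sub_one (by omega : d ≠ 0) R]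
    linear_combination (1 + b * R ^ (d - 1)) * hc
  have hunit := isUnit_one_add_mul_of_dvd hp hM hdvd
  rw [← mul_assoc] at hunit
  refine not_isUnit_one_add_mul (fun h0 => ?_) ?_ hunit
  · have hR0 : R = 0 := by linear_combination hc - b * h0
    norm_num [hR0] at hR
  · have hRd : 2 ≤ |R ^ (d - 1)| := by
      rw [abs_pow]
      exact hR.trans (le_self_pow₀ (by omega) (by omega))
    have hbR : 4 ≤ |b * R ^ (d - 1)| := by
      rw [abs_mul]
      nlinarith
    rw [le_abs] at hbR ⊢
    omega

lemma eq_neg_of_natAbs_eq_prime_pow {e k : ℕ} (hp : p.Prime) (hd : 2 ≤ d) (hb : b.natAbs = p ^ e)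
    (he : e ≠ 0) (hR : R.natAbs = p ^ k) (hk : k ≠ 0) (hRb : R ≠ b)
    (hM : ∀ l : ℕ, l.Prime → (l : ℤ) ∣ R - b + b * R ^ d → l = p) :
    d = 2 ∧ R = -b ∧ R ^ 2 = 4 := by
  have two_le_abs {x : ℤ} {n : ℕ} (hx : x.natAbs = p ^ n) (hn : n ≠ 0) : 2 ≤ |x| := by
    rw [Int.abs_eq_natAbs, hx]
    exact_mod_cast hp.two_le.trans (Nat.le_self_pow hn p)
  have prime_mul_dvd {x y : ℤ} {m n : ℕ} (hx : x.natAbs = p ^ m) (hy : y.natAbs = p ^ n)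
      (hmn : m < n) : p * x ∣ y := by
    rw [← Int.natAbs_dvd_natAbs, Int.natAbs_mul, Int.natAbs_natCast, hx, hy, ← pow_succ']
    exact pow_dvd_pow p hmn
  have hb2 := two_le_abs hb he
  have hR2 := two_le_abs hR hk
  rcases lt_trichotomy k e with hke | rfl | hek
  · have hb0 : b ≠ 0 := fun h0 => by norm_num [h0] at hb2
    exact absurd (prime_mul_dvd hR hb hke) (not_prime_mul_dvd_left hp hd hb0 hR2 hM)
  · have hneg : R = -b := (Int.natAbs_eq_natAbs_iff.1 (hR.trans hb.symm)).resolve_left hRb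
    have hpR : (p : ℤ) ∣ R := by
      rw [Int.natCast_dvd, hR]
      exact dvd_pow_self p hk
    have hfactor : R - b + b * R ^ d = R * (2 - R ^ d) := by rw [hneg]; ring
    rw [hfactor] at hM
    exact (sq_eq_four_of_prime_dvd hp hd hR2 hpR hM).imp_right fun h4 => ⟨hneg, h4⟩
  · exact absurd (prime_mul_dvd hb hR hek) (not_prime_mul_dvd_right hp hd hb2 hR2 hM)

end PrimePowers

section RationalPrimes

lemma exists_intCast_eq_of_padicValRat_nonneg {q : ℚ}
    (h : ∀ l : ℕ, l.Prime → 0 ≤ padicValRat l q) : ∃ n : ℤ, (n : ℚ) = q := by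
  refine ⟨q.num, q.den_eq_one_iff.1 (Nat.eq_one_iff_not_exists_prime_dvd.2 fun l hl hden => ?_)⟩
  have := Fact.mk hl
  have hnum : ¬ (l : ℤ) ∣ q.num := fun hnum =>
    Nat.not_coprime_of_dvd_of_dvd hl.one_lt (Int.natCast_dvd.1 hnum) hden q.reduced
  have hval := h l hl
  rw [padicValRat_def, padicValInt.eq_zero_of_not_dvd hnum] at hval
  have := one_le_padicValNat_of_dvd q.den_nz hden
  omega

lemma padicValRat_intCast_eq_zero_iff {l : ℕ} (hl : l.Prime) {n : ℤ} (hn : n ≠ 0) :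
    padicValRat l n = 0 ↔ ¬ (l : ℤ) ∣ n := by
  rw [padicValRat.of_int, Int.natCast_eq_zero, padicValInt, padicValNat.eq_zero_iff,
    ← Int.natCast_dvd]
  simp [hl.ne_one, hn]

lemma exists_natAbs_eq_pow {p : ℕ} {q : ℚ} (hq : q ≠ 0) (hp : 0 ≤ padicValRat p q)
    (h : ∀ l : ℕ, l.Prime → l ≠ p → padicValRat l q = 0) :
    ∃ (n : ℤ) (k : ℕ), (n : ℚ) = q ∧ n.natAbs = p ^ k := by
  obtain ⟨n, rfl⟩ := exists_intCast_eq_of_padicValRat_nonneg fun l hl => by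
    rcases eq_or_ne l p with rfl | hlp
    exacts [hp, (h l hl hlp).ge]
  have hn : n ≠ 0 := Int.cast_ne_zero.1 hq
  refine ⟨n, _, rfl, Nat.eq_prime_pow_of_unique_prime_dvd (Int.natAbs_ne_zero.2 hn) ?_⟩
  intro l hl hln
  by_contra hlp
  exact (padicValRat_intCast_eq_zero_iff hl hn).1 (h l hl hlp) (Int.natCast_dvd.2 hln)

end RationalPrimes

/-- The map that `psi d a b` induces on the denominator `r = a * z ^ d + b` of an affine point `z`.
At `r = 0` the junk value `(0 - b) / 0 = 0` gives `b`, as it should: `psi` takes a pole to `∞` and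
`∞` to `0`, where the denominator is `b`. -/
def denomMap (d : ℕ) (b r : ℚ) : ℚ := b + (r - b) / r ^ d

/-- The periodic points of `denomMap d b` other than the fixed point `b`, which corresponds to
`z = 0`. -/
def nontrivialPeriodicPts (d : ℕ) (b : ℚ) : Set ℚ := periodicPts (denomMap d b) \ {b}

section Periodic

variable {d : ℕ} {b r : ℚ}

lemma denomMap_self : denomMap d b b = b := by simp [denomMap]

lemma denomMap_zero (hd : d ≠ 0) : denomMap d b 0 = b := by simp [denomMap, hd]

lemma denomMap_sub : denomMap d b r - b = (r - b) / r ^ d := add_sub_cancel_left _ _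

lemma eq_of_mem_periodicPts_of_denomMap_eq (hr : r ∈ periodicPts (denomMap d b))
    (h : denomMap d b r = b) : r = b := by
  refine mem_of_apply_mem_of_mem_periodicPts (s := {b}) ?_ hr h
  simp [denomMap_self]

lemma mapsTo_denomMap_nontrivialPeriodicPts :
    MapsTo (denomMap d b) (nontrivialPeriodicPts d b) (nontrivialPeriodicPts d b) :=
  fun _ hr => ⟨(bijOn_periodicPts _).mapsTo hr.1,
    fun h => hr.2 (eq_of_mem_periodicPts_of_denomMap_eq hr.1 h)⟩

lemma ne_zero_of_mem_nontrivialPeriodicPts (hd : d ≠ 0) (hr : r ∈ nontrivialPeriodicPts d b) :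
    r ≠ 0 := by
  rintro rfl
  exact (mapsTo_denomMap_nontrivialPeriodicPts hr).2 (denomMap_zero hd)

section Valuation

variable {l : ℕ} [Fact l.Prime]

lemma padicValRat_denomMap_sub (hd : d ≠ 0) (hr : r ∈ nontrivialPeriodicPts d b) :
    padicValRat l (denomMap d b r - b) = padicValRat l (r - b) - d * padicValRat l r := by
  rw [denomMap_sub, padicValRat.div (sub_ne_zero.2 hr.2)
    (pow_ne_zero d (ne_zero_of_mem_nontrivialPeriodicPts hd hr)), padicValRat.pow]

lemma padicValRat_eq_zero_of_forall_nonneg (hd : d ≠ 0)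
    (h : ∀ y ∈ nontrivialPeriodicPts d b, 0 ≤ padicValRat l y)
    (hr : r ∈ nontrivialPeriodicPts d b) : padicValRat l r = 0 := by
  have hconst := apply_eq_of_forall_apply_le (φ := fun y => padicValRat l (y - b))
    mapsTo_denomMap_nontrivialPeriodicPts sdiff_subset (fun y hy => ?_) hr
  · simpa [padicValRat_denomMap_sub hd hr, hd] using hconst
  · have := mul_nonneg (Nat.cast_nonneg (α := ℤ) d) (h y hy)
    have := padicValRat_denomMap_sub (l := l) hd hy
    omega

lemma padicValRat_eq_zero_of_forall_nonpos (hd : d ≠ 0)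
    (h : ∀ y ∈ nontrivialPeriodicPts d b, padicValRat l y ≤ 0)
    (hr : r ∈ nontrivialPeriodicPts d b) : padicValRat l r = 0 := by
  have hconst := apply_eq_of_forall_apply_le (φ := fun y => -padicValRat l (y - b))
    mapsTo_denomMap_nontrivialPeriodicPts sdiff_subset (fun y hy => ?_) hr
  · simpa [padicValRat_denomMap_sub hd hr, hd] using hconst
  · have := mul_nonpos_of_nonneg_of_nonpos (Nat.cast_nonneg (α := ℤ) d) (h y hy)
    have := padicValRat_denomMap_sub (l := l) hd hy
    omega

lemma padicValRat_eq_zero_of_sub_pos (hb : padicValRat l b = 0) (hb0 : b ≠ 0) (hr : r ≠ 0)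
    (hrb : r ≠ b) (hpos : 0 < padicValRat l (r - b)) : padicValRat l r = 0 := by
  have hsum : b + (r - b) ≠ 0 := by rwa [add_sub_cancel]
  have hadd := padicValRat.add_eq_of_lt (p := l) hsum hb0 (sub_ne_zero.2 hrb) (by rwa [hb])
  rwa [add_sub_cancel, hb] at hadd

lemma padicValRat_nonneg_of_mem_nontrivialPeriodicPts (hd : 2 ≤ d) (hb : padicValRat l b = 0)
    (hb0 : b ≠ 0) (hr : r ∈ nontrivialPeriodicPts d b) : 0 ≤ padicValRat l r := by
  -- If `v r < 0`, then `denomMap d b r` has entered the invariant set of `y` with `0 < v (y - b)`,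
  -- which does not contain `r`.
  by_contra! hneg
  have hd0 : d ≠ 0 := by omega
  have hmaps : MapsTo (denomMap d b)
      {y ∈ nontrivialPeriodicPts d b | 0 < padicValRat l (y - b)}
      {y ∈ nontrivialPeriodicPts d b | 0 < padicValRat l (y - b)} := by
    rintro y ⟨hy, hpos⟩
    have hy0 := ne_zero_of_mem_nontrivialPeriodicPts hd0 hy
    refine ⟨mapsTo_denomMap_nontrivialPeriodicPts hy, ?_⟩
    rwa [padicValRat_denomMap_sub hd0 hy,
      padicValRat_eq_zero_of_sub_pos hb hb0 hy0 hy.2 hpos, mul_zero, sub_zero]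
  have hr0 := ne_zero_of_mem_nontrivialPeriodicPts hd0 hr
  have hval : padicValRat l (r - b) = padicValRat l r := by
    rw [sub_eq_add_neg]
    refine padicValRat.add_eq_of_lt ?_ hr0 (neg_ne_zero.2 hb0) (by rwa [padicValRat.neg, hb])
    rw [← sub_eq_add_neg]
    exact sub_ne_zero.2 hr.2
  have himage : 0 < padicValRat l (denomMap d b r - b) := by
    rw [padicValRat_denomMap_sub hd0 hr, hval]
    have : (2 : ℤ) ≤ d := by exact_mod_cast hd
    nlinarith
  have hpos := (mem_of_apply_mem_of_mem_periodicPts hmaps hr.1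
    ⟨mapsTo_denomMap_nontrivialPeriodicPts hr, himage⟩).2
  omega

end Valuation


section IntegerParameter

variable {p e : ℕ} {b : ℤ}

lemma padicValRat_eq_zero_of_not_dvd {l : ℕ} (hl : l.Prime) (hd : 2 ≤ d) (hb0 : b ≠ 0)
    (hlb : ¬ (l : ℤ) ∣ b) (hr : r ∈ nontrivialPeriodicPts d b) : padicValRat l r = 0 := by
  have := Fact.mk hl
  have hb : padicValRat l b = 0 := (padicValRat_intCast_eq_zero_iff hl hb0).2 hlb
  exact padicValRat_eq_zero_of_forall_nonneg (by omega) (fun y hy =>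
    padicValRat_nonneg_of_mem_nontrivialPeriodicPts hd hb (Int.cast_ne_zero.2 hb0) hy) hr

lemma padicValRat_eq_zero_of_ne (hp : p.Prime) (hd : 2 ≤ d) (hb : b.natAbs = p ^ e)
    (hr : r ∈ nontrivialPeriodicPts d b) {l : ℕ} (hl : l.Prime) (hlp : l ≠ p) :
    padicValRat l r = 0 := by
  refine padicValRat_eq_zero_of_not_dvd hl hd ?_ (fun hlb => hlp ?_) hr
  · rw [← Int.natAbs_ne_zero, hb]
    exact pow_ne_zero e hp.ne_zero
  · rw [Int.natCast_dvd, hb] at hlb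
    exact (Nat.prime_dvd_prime_iff_eq hl hp).1 (hl.dvd_of_dvd_pow hlb)

lemma eq_prime_of_dvd_denomMap_num (hp : p.Prime) (hd : 2 ≤ d) (hb : b.natAbs = p ^ e) {R : ℤ}
    (hR : (R : ℚ) ∈ nontrivialPeriodicPts d b) {l : ℕ} (hl : l.Prime)
    (hdvd : (l : ℤ) ∣ R - b + b * R ^ d) : l = p := by
  by_contra hlp
  have := Fact.mk hl
  have hR0 : (R : ℚ) ≠ 0 := ne_zero_of_mem_nontrivialPeriodicPts (by omega) hR
  have himage := mapsTo_denomMap_nontrivialPeriodicPts hR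
  have himage0 := ne_zero_of_mem_nontrivialPeriodicPts (by omega) himage
  have hnum : ((R - b + b * R ^ d : ℤ) : ℚ) = denomMap d b R * R ^ d := by
    rw [denomMap]
    push_cast
    field_simp
    ring
  have hnum0 : R - b + b * R ^ d ≠ 0 := by
    rw [← Int.cast_ne_zero (α := ℚ), hnum]
    exact mul_ne_zero himage0 (pow_ne_zero d hR0)
  refine (padicValRat_intCast_eq_zero_iff hl hnum0).1 ?_ hdvd
  rw [hnum, padicValRat.mul himage0 (pow_ne_zero d hR0), padicValRat.pow,
    padicValRat_eq_zero_of_ne hp hd hb himage hl hlp,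
    padicValRat_eq_zero_of_ne hp hd hb hR hl hlp, mul_zero, add_zero]

lemma padicValRat_nonpos_of_mem_nontrivialPeriodicPts (hp : p.Prime) (hd : 2 ≤ d)
    (hb : b.natAbs = p ^ e) (he : e ≠ 0) (hr : r ∈ nontrivialPeriodicPts d b) :
    padicValRat p r ≤ 0 := by
  by_contra! hpos
  have hr0 := ne_zero_of_mem_nontrivialPeriodicPts (by omega) hr
  obtain ⟨R, k, rfl, hk⟩ := exists_natAbs_eq_pow hr0 hpos.le fun l hl hlp =>
    padicValRat_eq_zero_of_ne hp hd hb hr hl hlp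
  have hk0 : k ≠ 0 := by
    rintro rfl
    refine hpos.ne' ((padicValRat_intCast_eq_zero_iff hp (Int.cast_ne_zero.1 hr0)).2 fun hpR => ?_)
    rw [Int.natCast_dvd, hk, pow_zero] at hpR
    exact hp.not_dvd_one hpR
  obtain ⟨rfl, hRb, hR4⟩ := eq_neg_of_natAbs_eq_prime_pow hp hd hb he hk hk0
    (fun h => hr.2 (congrArg _ h)) fun l hl => eq_prime_of_dvd_denomMap_num hp hd hb hr hl
  have hbQ : (b : ℚ) = -R := by rw [hRb]; push_cast; ring
  have hR4Q : (R : ℚ) ^ 2 = 4 := by exact_mod_cast hR4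
  have himage : denomMap 2 b R = -R / 2 := by
    rw [denomMap, hR4Q, hbQ]
    ring
  have hfixed : denomMap 2 b (-R / 2) = -R / 2 := by
    rw [denomMap, div_pow, neg_sq, hR4Q, hbQ]
    ring
  have hfix : (R : ℚ) = -R / 2 := mem_of_apply_mem_of_mem_periodicPts (s := {-(R : ℚ) / 2})
    (by simp [hfixed]) hr.1 himage
  exact hr0 (by linarith)

lemma eq_one_or_eq_neg_one_of_mem_nontrivialPeriodicPts (hp : p.Prime) (hd : 2 ≤ d)
    (hb : b.natAbs = p ^ e) (hr : r ∈ nontrivialPeriodicPts d b) : r = 1 ∨ r = -1 := by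
  have := Fact.mk hp
  have hvalp : padicValRat p r = 0 := by
    rcases eq_or_ne e 0 with rfl | he
    · rw [pow_zero] at hb
      refine padicValRat_eq_zero_of_not_dvd hp hd (by omega) (fun hpb => ?_) hr
      rw [Int.natCast_dvd, hb] at hpb
      exact hp.not_dvd_one hpb
    · exact padicValRat_eq_zero_of_forall_nonpos (by omega)
        (fun y hy => padicValRat_nonpos_of_mem_nontrivialPeriodicPts hp hd hb he hy) hr
  have hr0 := ne_zero_of_mem_nontrivialPeriodicPts (by omega) hr
  obtain ⟨R, k, rfl, hk⟩ := exists_natAbs_eq_pow hr0 hvalp.ge fun l hl hlp =>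
    padicValRat_eq_zero_of_ne hp hd hb hr hl hlp
  have hk0 : k = 0 := by
    by_contra hk0
    refine (padicValRat_intCast_eq_zero_iff hp (Int.cast_ne_zero.1 hr0)).1 hvalp ?_
    rw [Int.natCast_dvd, hk]
    exact dvd_pow_self p hk0
  rw [hk0, pow_zero] at hk
  exact_mod_cast Int.natAbs_eq_iff.1 hk

lemma pow_eq_one_of_mem_nontrivialPeriodicPts (hp : p.Prime) (hd : 2 ≤ d)
    (hb : b.natAbs = p ^ e) (hr : r ∈ nontrivialPeriodicPts d b) : r ^ d = 1 := by
  rcases eq_one_or_eq_neg_one_of_mem_nontrivialPeriodicPts hp hd hb hr with rfl | rfl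
  · exact one_pow d
  rcases d.even_or_odd with hev | hodd
  · exact hev.neg_one_pow
  exfalso
  have himage : denomMap d b (-1) = 2 * b + 1 := by
    rw [denomMap, hodd.neg_one_pow]
    ring
  have hmem := mapsTo_denomMap_nontrivialPeriodicPts hr
  rw [himage] at hmem
  have hb0 : (b : ℚ) ≠ 0 := by
    rw [Int.cast_ne_zero, ← Int.natAbs_ne_zero, hb]
    exact pow_ne_zero e hp.ne_zero
  rcases eq_one_or_eq_neg_one_of_mem_nontrivialPeriodicPts hp hd hb hmem with h | h
  · exact hb0 (by linarith)
  · exact hr.2 (by rw [mem_singleton_iff]; linarith)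

end IntegerParameter

end Periodic

/-- For a nonzero integer `b`, the values `r` whose forward orbit under `denomMap d b` reaches `b`
or a `d`-th root of unity `δ`: the fixed point `b`, its preimage `0`, the roots of unity `δ`, and,
for `d = 2`, the second preimage `b / (1 - δ * b)` of `δ`. -/
def exceptionalSet (d : ℕ) (b : ℚ) : Set ℚ :=
  {r | r = b ∨ r = 0 ∨ ∃ δ : ℚ, δ ^ d = 1 ∧ δ ≠ b ∧ (r = δ ∨ d = 2 ∧ r = b / (1 - δ * b))}

lemma periodicPts_denomMap_subset {p d e : ℕ} {b : ℤ} (hp : p.Prime) (hd : 2 ≤ d)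
    (hb : b.natAbs = p ^ e) : periodicPts (denomMap d b) ⊆ exceptionalSet d b := by
  intro r hr
  rcases eq_or_ne r b with hrb | hrb
  · exact .inl hrb
  · exact .inr (.inr
      ⟨r, pow_eq_one_of_mem_nontrivialPeriodicPts hp hd hb ⟨hr, hrb⟩, hrb, .inl rfl⟩)

section Preimages

variable {d : ℕ} {b : ℤ} {r δ : ℚ}

lemma sub_ne_neg_mul_pow (hd : 2 ≤ d) (hr : r ≠ 0) : r - b ≠ -b * r ^ d := by
  intro h
  refine mul_pow_sub_pow_ne r.isCoprime_num_den (Rat.num_ne_zero.2 hr)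
    (Int.natCast_ne_zero.2 r.den_nz) hd (b := b) ?_
  qify
  rw [← r.mul_den_eq_num, mul_pow, mul_assoc, mul_pow_sub_one (by omega)]
  linear_combination (-r.den ^ d : ℚ) * h

lemma eq_one_of_sub_eq_one_sub_mul_pow (hd : 3 ≤ d) (hb : b ≠ 0) (h : r - b = (1 - b) * r ^ d) :
    r = 1 := by
  have hr0 : r ≠ 0 := by
    rintro rfl
    rw [zero_sub, zero_pow (by omega), mul_zero, neg_eq_zero] at h
    exact hb (Int.cast_eq_zero.1 h)
  have hint : (1 - b) * (r.num ^ d - r.den ^ d) = r.den ^ (d - 1) * (r.num - r.den) := by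
    have hpow : (r.den : ℚ) ^ (d - 1) * r.den = r.den ^ d := pow_sub_one_mul (by omega) _
    qify
    rw [← r.mul_den_eq_num, mul_pow]
    linear_combination (-r.den ^ d : ℚ) * h - (r - 1) * hpow
  have habs := natAbs_eq_of_mul_pow_sub_pow_eq r.isCoprime_num_den (Rat.num_ne_zero.2 hr0)
    (Int.natCast_ne_zero.2 r.den_nz) hd hint
  have hr : r = 1 ∨ r = -1 := by
    have hden : (r.den : ℚ) ≠ 0 := Nat.cast_ne_zero.2 r.den_nz
    refine (Int.natAbs_eq_natAbs_iff.1 habs).imp (fun hnum => ?_) (fun hnum => ?_) <;>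
      rw [← mul_left_inj' hden, r.mul_den_eq_num, hnum] <;> simp
  rcases hr with rfl | rfl
  · rfl
  · rcases d.even_or_odd with hev | hodd
    · rw [hev.neg_one_pow] at h
      linarith
    · rw [hodd.neg_one_pow] at h
      exact absurd (by linarith : (b : ℚ) = 0) (Int.cast_ne_zero.2 hb)

lemma eq_one_or_eq_of_sub_eq_one_sub_mul_pow (hd : 2 ≤ d) (hb : b ≠ 0)
    (h : r - b = (1 - b) * r ^ d) : r = 1 ∨ d = 2 ∧ r = b / (1 - b) := by
  rcases hd.eq_or_lt with rfl | hd
  · have hfactor : (r - 1) * ((1 - b) * r - b) = 0 := by linear_combination -h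
    refine (mul_eq_zero.1 hfactor).imp sub_eq_zero.1 fun h0 => ⟨rfl, ?_⟩
    rw [eq_div_iff]
    · linear_combination h0
    · intro hb1
      rw [hb1, zero_mul, zero_sub, neg_eq_zero] at h0
      exact hb (Int.cast_eq_zero.1 h0)
  · exact .inl (eq_one_of_sub_eq_one_sub_mul_pow hd hb h)

lemma eq_or_eq_of_sub_eq_sub_mul_pow (hd : 2 ≤ d) (hb : b ≠ 0) (hδ : δ ^ d = 1)
    (h : r - b = (δ - b) * r ^ d) : r = δ ∨ d = 2 ∧ r = b / (1 - δ * b) := by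
  rcases pow_eq_one_iff_cases.1 hδ with hd0 | rfl | ⟨rfl, hev⟩
  · omega
  · rw [one_mul]
    exact eq_one_or_eq_of_sub_eq_one_sub_mul_pow hd hb h
  · have hneg : -r - ((-b : ℤ) : ℚ) = (1 - ((-b : ℤ) : ℚ)) * (-r) ^ d := by
      rw [hev.neg_pow]
      push_cast
      linear_combination -h
    refine (eq_one_or_eq_of_sub_eq_one_sub_mul_pow hd (neg_ne_zero.2 hb) hneg).imp
      neg_eq_iff_eq_neg.1 (And.imp_right fun hr => ?_)
    rw [neg_eq_iff_eq_neg.1 hr]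
    push_cast
    ring

-- For `d = 2` this says that `b / (1 - b)` has no preimage under `denomMap 2 b`.
lemma sub_mul_one_sub_ne (hb0 : b ≠ 0) (hb1 : b ≠ 1) : (r - b) * (1 - b) ≠ b ^ 2 * r ^ 2 := by
  intro h
  have hbQ : (b : ℚ) ≠ 0 := Int.cast_ne_zero.2 hb0
  have hr0 : r ≠ 0 := by
    rintro rfl
    have hb1Q : 1 - (b : ℚ) ≠ 0 := sub_ne_zero.2 fun h1 => hb1 (Int.cast_eq_one.1 h1.symm)
    simp [hbQ, hb1Q] at h
  obtain ⟨s, rfl⟩ : ∃ s, r = b * s := ⟨r / b, (mul_div_cancel₀ r hbQ).symm⟩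
  refine cube_mul_sq_ne hb0 hb1 s.isCoprime_num_den
    (Rat.num_ne_zero.2 (right_ne_zero_of_mul hr0)) ?_
  qify
  rw [← s.mul_den_eq_num]
  apply mul_left_cancel₀ hbQ
  linear_combination (-s.den ^ 2 : ℚ) * h

lemma sub_mul_one_sub_mul_ne (hb : b ≠ 0) (hδ : δ ^ 2 = 1) (hδb : δ ≠ b) :
    (r - b) * (1 - δ * b) ≠ δ * b ^ 2 * r ^ 2 := by
  intro h
  rcases sq_eq_one_iff.1 hδ with rfl | rfl
  · refine sub_mul_one_sub_ne hb (fun hb1 => hδb ?_) (r := r) ?_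
    · rw [hb1, Int.cast_one]
    · linear_combination h
  · refine sub_mul_one_sub_ne (neg_ne_zero.2 hb) (fun hb1 => hδb ?_) (r := -r) ?_
    · rw [neg_eq_iff_eq_neg.1 hb1, Int.cast_neg, Int.cast_one]
    · push_cast
      linear_combination -h

lemma mem_exceptionalSet_of_denomMap_mem (hd : 2 ≤ d) (hb : b ≠ 0)
    (h : denomMap d b r ∈ exceptionalSet d b) : r ∈ exceptionalSet d b := by
  rcases eq_or_ne r 0 with hr0 | hr0
  · exact .inr (.inl hr0)
  have hrd : r ^ d ≠ 0 := pow_ne_zero d hr0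
  have hsub {c : ℚ} (hc : denomMap d b r = c) : r - b = (c - b) * r ^ d := by
    rw [← hc, denomMap_sub, div_mul_cancel₀ _ hrd]
  rcases h with h | h | ⟨δ, hδ, hδb, h | ⟨rfl, h⟩⟩
  · left
    simpa [sub_eq_zero] using hsub h
  · exact absurd (by simpa using hsub h) (sub_ne_neg_mul_pow hd hr0)
  · exact .inr (.inr ⟨δ, hδ, hδb, eq_or_eq_of_sub_eq_sub_mul_pow hd hb hδ (hsub h)⟩)
  · have hden : 1 - δ * b ≠ 0 := fun h0 => hδb (by linear_combination δ * h0 + b * hδ)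
    refine absurd ?_ (sub_mul_one_sub_mul_ne (r := r) hb hδ hδb)
    linear_combination (1 - δ * b) * hsub h + r ^ 2 * div_mul_cancel₀ (b : ℚ) hden

end Preimages

section Counting

lemma eq_zero_of_sq_sub_sq_eq_one {u w : ℤ} (h : u ^ 2 - w ^ 2 = 1) : w = 0 := by
  rw [sq_sub_sq] at h
  rcases Int.eq_one_or_neg_one_of_mul_eq_one' h with ⟨h1, h2⟩ | ⟨h1, h2⟩ <;> omega

lemma eq_of_isSquare_mul_of_abs_sub_le_two {m n : ℤ} (hm : m ≠ 0) (hn : n ≠ 0)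
    (hmn : |m - n| ≤ 2) (h : IsSquare (m * n)) : m = n := by
  by_contra hne
  obtain ⟨c, hc⟩ := h
  have hc0 : c ≠ 0 := fun h0 => mul_ne_zero hm hn (by rw [hc, h0, zero_mul])
  have hsq : (m + n) ^ 2 - (2 * c) ^ 2 = (m - n) ^ 2 := by linear_combination 4 * hc
  have hcases : (m - n = 1 ∨ m - n = -1) ∨ (m - n = 2 ∨ m - n = -2) := by
    rw [abs_le] at hmn
    omega
  rcases hcases with h1 | h2
  · rw [sq_eq_one_iff.2 h1] at hsq
    have := eq_zero_of_sq_sub_sq_eq_one hsq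
    omega
  · obtain ⟨j, hj⟩ : ∃ j, m + n = 2 * j := ⟨(m + n) / 2, by omega⟩
    rw [sq_eq_sq_iff_eq_or_eq_neg.2 h2, hj] at hsq
    exact hc0 (eq_zero_of_sq_sub_sq_eq_one (u := j) (by linarith))

variable {d : ℕ} {a r : ℚ} {b : ℤ}

lemma exists_sub_eq_mul_sq (hd : d ≠ 0) (hr : r ∈ exceptionalSet d b) (hrb : r ≠ b) :
    ∃ δ : ℤ, |δ| ≤ 1 ∧ δ ≠ b ∧ (r = δ ∨ r = b / (1 - δ * b)) ∧
      ∃ s : ℚ, s ≠ 0 ∧ r - b = (δ - b) * s ^ 2 := by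
  rcases hr with h | rfl | ⟨δ, hδ, hδb, h⟩
  · exact absurd h hrb
  · exact ⟨0, by simp, fun h => hrb (by simp [← h]), by simp, 1, by simp⟩
  obtain ⟨δ, rfl, hδ1⟩ : ∃ n : ℤ, (n : ℚ) = δ ∧ |n| = 1 := by
    rcases pow_eq_one_iff_cases.1 hδ with hd0 | rfl | ⟨rfl, -⟩
    exacts [absurd hd0 hd, ⟨1, by simp⟩, ⟨-1, by simp⟩]
  refine ⟨δ, hδ1.le, fun h => hδb (congrArg _ h), h.imp_right And.right, ?_⟩
  rcases h with rfl | ⟨rfl, rfl⟩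
  · exact ⟨1, one_ne_zero, by ring⟩
  · have hden : 1 - (δ : ℚ) * b ≠ 0 := fun h0 => hδb (by linear_combination δ * h0 + b * hδ)
    have hb : (b : ℚ) ≠ 0 := fun hb => hrb (by simp [hb])
    refine ⟨b / (1 - δ * b), div_ne_zero hb hden, ?_⟩
    set c : ℚ := b / (1 - δ * b)
    have hc : c * (1 - δ * b) = b := div_mul_cancel₀ _ hden
    linear_combination (1 - δ * c) * hc - b * c ^ 2 * hδ

lemma isSquare_mul_of_mul_pow_eq {u v s t z w : ℚ} (hev : Even d) (hs : s ≠ 0) (ht : t ≠ 0)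
    (hz : a * z ^ d = u * s ^ 2) (hw : a * w ^ d = v * t ^ 2) : IsSquare (u * v) := by
  obtain ⟨k, rfl⟩ := hev
  refine ⟨a * (z * w) ^ k / (s * t), ?_⟩
  field_simp
  linear_combination (-a * w ^ (k + k)) * hz - (u * s ^ 2) * hw

lemma exists_forall_denom_eq (hd : d ≠ 0) (a : ℚ) (b : ℤ) : ∃ ρ₁ ρ₂ : ℚ, ∀ z : ℚ,
    a * z ^ d + b ∈ exceptionalSet d b →
      a * z ^ d + b = b ∨ a * z ^ d + b = ρ₁ ∨ a * z ^ d + b = ρ₂ := by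
  rcases d.even_or_odd with hev | hodd
  · by_cases hex : ∃ w : ℚ, a * w ^ d + b ∈ exceptionalSet d b ∧ a * w ^ d + b ≠ b
    · obtain ⟨w, hw, hwb⟩ := hex
      obtain ⟨ε, hε, hεb, -, t, ht, hwt⟩ := exists_sub_eq_mul_sq hd hw hwb
      refine ⟨ε, b / (1 - ε * b), fun z hz => or_iff_not_imp_left.2 fun hzb => ?_⟩
      obtain ⟨δ, hδ, hδb, hr, s, hs, hzs⟩ := exists_sub_eq_mul_sq hd hz hzb
      rw [add_sub_cancel_right] at hwt hzs
      have hsq : IsSquare ((δ - b) * (ε - b)) := by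
        rw [← Rat.isSquare_intCast_iff]
        exact_mod_cast isSquare_mul_of_mul_pow_eq hev hs ht hzs hwt
      have heq := eq_of_isSquare_mul_of_abs_sub_le_two (sub_ne_zero.2 hδb) (sub_ne_zero.2 hεb)
        (by rw [abs_le] at hδ hε ⊢; omega) hsq
      rwa [← sub_left_injective heq]
    · push Not at hex
      exact ⟨b, b, fun z hz => .inl (hex z hz)⟩
  · refine ⟨0, 1, fun z hz => ?_⟩
    rcases hz with h | h | ⟨δ, hδ, -, h | ⟨rfl, -⟩⟩
    · exact .inl h
    · exact .inr (.inl h)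
    · exact .inr (.inr (h.trans (hodd.pow_injective (hδ.trans (one_pow d).symm))))
    · exact absurd hodd (by decide)

lemma exists_forall_eq_or_eq_neg (hd : d ≠ 0) (ha : a ≠ 0) (c : ℚ) :
    ∃ t : ℚ, ∀ z : ℚ, a * z ^ d = c → z = t ∨ z = -t := by
  by_cases hex : ∃ t : ℚ, a * t ^ d = c
  · obtain ⟨t, rfl⟩ := hex
    exact ⟨t, fun z hz => ((pow_eq_pow_iff_of_ne_zero hd).1 (mul_left_cancel₀ ha hz)).imp_right
      And.left⟩
  · exact ⟨0, fun z hz => absurd ⟨z, hz⟩ hex⟩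

end Counting

/-- The denominator `a * z ^ d + b` of `psi d a b` at `z`, which intertwines `psi d a b` with
`denomMap d b`. The point `∞` gets the value `b` of the point `0`, as both are mapped to `0`. -/
def psiDenom (d : ℕ) (a b : ℚ) : Option ℚ → ℚ
  | none => b
  | some z => a * z ^ d + b

lemma semiconj_psiDenom {d : ℕ} (hd : d ≠ 0) (a b : ℚ) :
    Semiconj (psiDenom d a b) (psi d a b) (denomMap d b) := by
  rintro (_ | z)
  · simp [psi, psiDenom, denomMap, hd]
  · by_cases hz : a * z ^ d + b = 0
    · simp [psi, psiDenom, hz, denomMap_zero hd]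
    · simp only [psi, psiDenom, if_neg hz, denomMap, add_sub_cancel_right, div_pow]
      ring

lemma encard_psiDenom_preimage_exceptionalSet_le {d : ℕ} (hd : d ≠ 0) {a : ℚ} (ha : a ≠ 0)
    (b : ℤ) : (psiDenom d a b ⁻¹' exceptionalSet d b).encard ≤ 6 := by
  obtain ⟨ρ₁, ρ₂, hρ⟩ := exists_forall_denom_eq hd a b
  obtain ⟨t₁, ht₁⟩ := exists_forall_eq_or_eq_neg hd ha (ρ₁ - b)
  obtain ⟨t₂, ht₂⟩ := exists_forall_eq_or_eq_neg hd ha (ρ₂ - b)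
  have hsub : psiDenom d a b ⁻¹' exceptionalSet d b ⊆
      ({none, some 0, some t₁, some (-t₁), some t₂, some (-t₂)} : Finset (Option ℚ)) := by
    rintro (_ | z) hz
    · simp
    rcases hρ z hz with h | h | h
    · have : z = 0 := by simpa [ha, hd] using h
      simp [this]
    · rcases ht₁ z (eq_sub_of_add_eq h) with rfl | rfl <;> simp
    · rcases ht₂ z (eq_sub_of_add_eq h) with rfl | rfl <;> simp
  refine (encard_le_encard hsub).trans ?_
  rw [encard_coe_eq_coe_finsetCard]
  exact_mod_cast Finset.card_le_six

/-- Let `p` be a prime, `d ≥ 2`, `a` a nonzero rational, and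
`b = σ·p^e` with `σ ∈ {1,−1}` and `e ≥ 0`. Then `ψ_{d,a,b}` has at most `6`
rational preperiodic points (points with finite forward orbit, equivalently
eventually periodic points). -/
theorem preper_card_le_six
    (p : ℕ) (hp : p.Prime) (d : ℕ) (hd : 2 ≤ d) (a : ℚ) (ha : a ≠ 0)
    (σ : ℚ) (hσ : σ = 1 ∨ σ = -1) (e : ℕ) (b : ℚ) (hb : b = σ * (p : ℚ) ^ e) :
    {P : Option ℚ | ∃ m n : ℕ, m < n ∧ (psi d a b)^[m] P = (psi d a b)^[n] P}.encard ≤ 6 := by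
  obtain ⟨B, rfl, hB⟩ : ∃ B : ℤ, (B : ℚ) = b ∧ B.natAbs = p ^ e := by
    rcases hσ with rfl | rfl
    exacts [⟨p ^ e, by simp [hb], by simp [Int.natAbs_pow]⟩,
      ⟨-p ^ e, by simp [hb], by simp [Int.natAbs_pow]⟩]
  have hB0 : B ≠ 0 := by
    rw [← Int.natAbs_ne_zero, hB]
    exact pow_ne_zero e hp.ne_zero
  have hd0 : d ≠ 0 := by omega
  have hsemi (n : ℕ) := (semiconj_psiDenom hd0 a B).iterate_right n
  refine (encard_le_encard ?_).trans (encard_psiDenom_preimage_exceptionalSet_le hd0 ha B)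
  rintro P ⟨m, n, hmn, h⟩
  rw [mem_preimage]
  refine mem_of_iterate_eq_iterate (periodicPts_denomMap_subset hp hd hB)
    (fun _ => mem_exceptionalSet_of_denomMap_mem hd hB0) hmn ?_
  rw [← hsemi m P, ← hsemi n P, h]
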